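/- Let Z : Ω → ℝ^{d_z} be a measurable random variable on a probability space (Ω, P), let D_x be a set, and let μ, σ, f : D_x × ℝ^{d_z} → ℝ be such that σ ≥ 0 everywhere and for every x ∈ D_x the maps z ↦ μ(x,z), z ↦ σ(x,z), z ↦ f(x,z) are Borel measurable. Let β ≥ 0 and define l(x,z) := μ(x,z) − √β·σ(x,z) and u(x,z) := μ(x,z) + √β·σ(x,z), and assume l(x,z) ≤ f(x,z) ≤ u(x,z) for all x ∈ D_x, z ∈ ℝ^{d_z}. Fix α ∈ (0,1), let x* ∈ D_x be arbitrary, let x_t ∈ D_x satisfy VaR_α(u(x, Z)) ≤ VaR_α(u(x_t, Z)) for all x ∈ D_x, and let z_t ∈ ℝ^{d_z} be a lacing value with respect to x_t, i.e., l(x_t, z_t) ≤ VaR_α(l(x_t, Z)) and VaR_α(u(x_t, Z)) ≤ u(x_t, z_t). Then the instantaneous regret satisfies VaR_α(f(x*, Z)) − VaR_α(f(x_t, Z)) ≤ 2·√β·σ(x_t, z_t). -/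

import Mathlib

open MeasureTheory Set

/-- Value-at-risk of a real random variable `X` at level `α`. -/
noncomputable def VaR {Ω : Type*} [MeasurableSpace Ω] (P : Measure Ω)
    (X : Ω → ℝ) (α : ℝ) : ℝ :=
  sInf {w : ℝ | ENNReal.ofReal α ≤ P {ω | X ω ≤ w}}

/-!
Value-at-risk is monotone: if `X ≤ Y`, the sublevel sets of `X` contain those of `Y`, so every
threshold admissible for `Y` is admissible for `X`. As `sInf` is `0` on empty or unbounded sets,
this also needs the distribution function to fall below `α` at `-∞` and to exceed it at `+∞`. Hence
`VaR (f x*) ≤ VaR (u x*) ≤ VaR (u xₜ)` and `VaR (l xₜ) ≤ VaR (f xₜ)`, so the regret is at most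
`VaR (u xₜ) - VaR (l xₜ)`, which a lacing value `zₜ` bounds by `u xₜ zₜ - l xₜ zₜ`.
-/

open Filter Topology ENNReal

section Tails

variable {Ω R : Type*} [MeasurableSpace Ω] {P : Measure Ω} {X : Ω → R}

theorem tendsto_measure_setOf_le_atTop [Preorder R] [(atTop : Filter R).IsCountablyGenerated] :
    Tendsto (fun w => P {ω | X ω ≤ w}) atTop (𝓝 (P univ)) := by
  have hunion : ⋃ w, {ω | X ω ≤ w} = univ :=
    eq_univ_of_forall fun ω => mem_iUnion.2 ⟨X ω, le_rfl⟩
  rw [← hunion]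
  exact tendsto_measure_iUnion_atTop fun _ _ hvw _ hω => le_trans hω hvw

theorem tendsto_measure_setOf_le_atBot [IsFiniteMeasure P] [Preorder R] [NoBotOrder R] [Nonempty R]
    [(atBot : Filter R).IsCountablyGenerated] [TopologicalSpace R] [ClosedIicTopology R]
    [MeasurableSpace R] [OpensMeasurableSpace R] (hX : AEMeasurable X P) :
    Tendsto (fun w => P {ω | X ω ≤ w}) atBot (𝓝 0) := by
  have hinter : ⋂ w, {ω | X ω ≤ w} = ∅ := by
    refine eq_empty_of_forall_notMem fun ω hω => ?_
    obtain ⟨w, hw⟩ := exists_not_ge (X ω)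
    exact hw (mem_iInter.1 hω w)
  rw [← measure_empty (μ := P), ← hinter]
  exact tendsto_measure_iInter_atBot (fun _ => hX.nullMeasurableSet_preimage measurableSet_Iic)
    (fun _ _ hvw _ hω => le_trans hω hvw) ⟨Classical.arbitrary R, measure_ne_top P _⟩

theorem nonempty_setOf_le_measure_setOf_le [Preorder R] [IsDirectedOrder R] [Nonempty R]
    [(atTop : Filter R).IsCountablyGenerated] {c : ℝ≥0∞} (hc : c < P univ) :
    {w | c ≤ P {ω | X ω ≤ w}}.Nonempty :=
  (tendsto_measure_setOf_le_atTop.eventually_const_le hc).exists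

theorem bddBelow_setOf_le_measure_setOf_le [IsFiniteMeasure P] [LinearOrder R] [NoBotOrder R]
    [Nonempty R] [(atBot : Filter R).IsCountablyGenerated] [TopologicalSpace R]
    [ClosedIicTopology R] [MeasurableSpace R] [OpensMeasurableSpace R] (hX : AEMeasurable X P)
    {c : ℝ≥0∞} (hc : 0 < c) : BddBelow {w | c ≤ P {ω | X ω ≤ w}} := by
  obtain ⟨a, ha⟩ := ((tendsto_measure_setOf_le_atBot hX).eventually_lt_const hc).exists
  refine ⟨a, fun w hw => le_of_not_ge fun hwa => ?_⟩
  have hmono : P {ω | X ω ≤ w} ≤ P {ω | X ω ≤ a} := measure_mono fun _ hω => le_trans hω hwa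
  exact (hw.trans hmono).not_gt ha

end Tails

theorem VaR_mono_ae {Ω : Type*} [MeasurableSpace Ω] {P : Measure Ω} [IsFiniteMeasure P]
    {X Y : Ω → ℝ} {α : ℝ} (hX : AEMeasurable X P) (hXY : X ≤ᵐ[P] Y) (hα₀ : 0 < α)
    (hα₁ : ENNReal.ofReal α < P univ) : VaR P X α ≤ VaR P Y α := by
  refine csInf_le_csInf (bddBelow_setOf_le_measure_setOf_le hX (ENNReal.ofReal_pos.2 hα₀))
    (nonempty_setOf_le_measure_setOf_le hα₁) fun w hw => hw.trans (measure_mono_ae ?_)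
  filter_upwards [hXY] with ω hω hYw using hω.trans hYw

/-- A lacing value of the bounding functions `l`, `u` at level `α`: a point `z` at which the
interval `[l z, u z]` encloses the one from the value-at-risk of `l(Z)` to that of `u(Z)`. It turns
a gap between two values-at-risk into a pointwise gap. The order `l ≤ u` is not part of the
notion. -/
structure IsLacingValue {Ω E : Type*} [MeasurableSpace Ω] (P : Measure Ω) (Z : Ω → E)
    (l u : E → ℝ) (α : ℝ) (z : E) : Prop where
  lower_le_VaR : l z ≤ VaR P (fun ω => l (Z ω)) α
  VaR_le_upper : VaR P (fun ω => u (Z ω)) α ≤ u z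

theorem IsLacingValue.VaR_sub_VaR_le {Ω E : Type*} [MeasurableSpace Ω] {P : Measure Ω}
    {Z : Ω → E} {l u : E → ℝ} {α : ℝ} {z : E} (hz : IsLacingValue P Z l u α z) :
    VaR P (fun ω => u (Z ω)) α - VaR P (fun ω => l (Z ω)) α ≤ u z - l z :=
  sub_le_sub hz.VaR_le_upper hz.lower_le_VaR

theorem stmt9_general {Ω E D : Type*} [MeasurableSpace Ω] {P : Measure Ω} [IsFiniteMeasure P]
    {Z : Ω → E} {l u f : D → E → ℝ}
    (hl : ∀ x, AEMeasurable (fun ω => l x (Z ω)) P) (hf : ∀ x, AEMeasurable (fun ω => f x (Z ω)) P)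
    (hlf : ∀ x, ∀ᵐ ω ∂P, l x (Z ω) ≤ f x (Z ω)) (hfu : ∀ x, ∀ᵐ ω ∂P, f x (Z ω) ≤ u x (Z ω))
    {α : ℝ} (hα₀ : 0 < α) (hα₁ : ENNReal.ofReal α < P univ) (xstar : D) {xt : D}
    (hxt : ∀ x, VaR P (fun ω => u x (Z ω)) α ≤ VaR P (fun ω => u xt (Z ω)) α)
    {zt : E} (hzt : IsLacingValue P Z (l xt) (u xt) α zt) :
    VaR P (fun ω => f xstar (Z ω)) α - VaR P (fun ω => f xt (Z ω)) α ≤ u xt zt - l xt zt := by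
  have hupper : VaR P (fun ω => f xstar (Z ω)) α ≤ VaR P (fun ω => u xt (Z ω)) α :=
    (VaR_mono_ae (hf xstar) (hfu xstar) hα₀ hα₁).trans (hxt xstar)
  have hlower : VaR P (fun ω => l xt (Z ω)) α ≤ VaR P (fun ω => f xt (Z ω)) α :=
    VaR_mono_ae (hl xt) (hlf xt) hα₀ hα₁
  exact (sub_le_sub hupper hlower).trans hzt.VaR_sub_VaR_le

theorem stmt9 {Ω : Type*} [MeasurableSpace Ω] (P : Measure Ω)
    [IsProbabilityMeasure P] {dz : ℕ} (Z : Ω → (Fin dz → ℝ)) (hZ : Measurable Z)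
    {Dx : Type*} (μ σ f : Dx → (Fin dz → ℝ) → ℝ)
    (hσ_nonneg : ∀ (x : Dx) (z : Fin dz → ℝ), 0 ≤ σ x z)
    (hμ : ∀ x : Dx, Measurable (μ x)) (hσ : ∀ x : Dx, Measurable (σ x))
    (hf : ∀ x : Dx, Measurable (f x))
    (β : ℝ) (hβ : 0 ≤ β)
    (l u : Dx → (Fin dz → ℝ) → ℝ)
    (hldef : ∀ (x : Dx) (z : Fin dz → ℝ), l x z = μ x z - Real.sqrt β * σ x z)
    (hudef : ∀ (x : Dx) (z : Fin dz → ℝ), u x z = μ x z + Real.sqrt β * σ x z)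
    (hlf : ∀ (x : Dx) (z : Fin dz → ℝ), l x z ≤ f x z)
    (hfu : ∀ (x : Dx) (z : Fin dz → ℝ), f x z ≤ u x z)
    (α : ℝ) (hα : α ∈ Set.Ioo (0 : ℝ) 1)
    (xstar xt : Dx)
    (hxt : ∀ x : Dx, VaR P (fun ω => u x (Z ω)) α ≤ VaR P (fun ω => u xt (Z ω)) α)
    (zt : Fin dz → ℝ)
    (hzt_l : l xt zt ≤ VaR P (fun ω => l xt (Z ω)) α)
    (hzt_u : VaR P (fun ω => u xt (Z ω)) α ≤ u xt zt) :
    VaR P (fun ω => f xstar (Z ω)) α - VaR P (fun ω => f xt (Z ω)) α ≤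
      2 * Real.sqrt β * σ xt zt := by
  have hl x : AEMeasurable (fun ω => l x (Z ω)) P := by simp only [hldef]; fun_prop
  linarith [hldef xt zt, hudef xt zt, stmt9_general hl (fun x => ((hf x).comp hZ).aemeasurable)
    (fun x => ae_of_all P fun ω => hlf x (Z ω)) (fun x => ae_of_all P fun ω => hfu x (Z ω))
    hα.1 (by simpa using hα.2) xstar hxt ⟨hzt_l, hzt_u⟩]
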